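/- For each n ∈ ℕ let X_n be a separable metric space, and suppose given predicates Ψ_n : X_n × X_n × [0,∞) × [0,∞) → Prop together with functions δ_n : X_n → (0,∞), Q_n : X_n → [0,∞), R_n : X_n × [0,∞) → [0,∞) and ε_n : X_n × [0,∞) → (0,∞) such that for every n, every x ∈ X_n and every q ≥ Q_n(x): for all y ∈ X_n, all t ≥ Q_n(x) and all s ≥ R_n(x,q), if t ∈ (q − ε_n(x,q), q + ε_n(x,q)) and d(x,y) < δ_n(x), then Ψ_n(x,y,s,t). Then there exist a single continuous increasing function ψ : [0,∞) → [0,∞) and continuous functions β_n : X_n → [0,∞) such that for every n ∈ ℕ and every y ∈ X_n there exists x ∈ X_n such that for all t ≥ β_n(y) and all s ≥ ψ(t), both d(x,y) < δ_n(x) and Ψ_n(x,y,s,t) hold. -/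

import Mathlib

open Filter Topology TopologicalSpace

/-!
Partitions of unity turn a locally constant choice of sufficiently large numbers into a continuous
one, and this produces both `ψ` and the `β n`. For fixed `n` and `x`, compactness of `[Q n x, k]`
gives one bound on `s` valid for all `t` in that interval. Countably many pairs `(n, x)` suffice to
cover all the spaces; requiring `ψ` to serve the `j`-th pair only at those `t` with `j ≤ t` leaves
finitely many bounds to dominate near each `t`. Then `β n y` only has to exceed the point from which
`ψ` serves some pair `(n, x)` with `x` close to `y`.
-/

open scoped NNReal

theorem eventually_forall_mem_of_isCompact {α T : Type*} [TopologicalSpace T] {l : Filter α}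
    {K : Set T} (hK : IsCompact K) {P : α → T → Prop}
    (h : ∀ q ∈ K, ∀ᶠ p in l ×ˢ 𝓝[K] q, P p.1 p.2) : ∀ᶠ s in l, ∀ t ∈ K, P s t := by
  refine hK.induction_on (p := fun S => ∀ᶠ s in l, ∀ t ∈ S, P s t) (by simp)
    (fun _ _ hST hT => hT.mono fun _ hs t ht => hs t (hST ht))
    (fun _ _ hS hT => (hS.and hT).mono fun _ hs t ht => ht.elim (hs.1 t) (hs.2 t))
    fun q hq => ?_
  obtain ⟨A, hA, B, hB, hAB⟩ := mem_prod_iff.1 (h q hq)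
  exact ⟨B, hB, mem_of_superset hA fun s hs t ht => hAB (Set.mk_mem_prod hs ht)⟩

theorem exists_continuous_forall_mem_of_isUpperSet {Y : Type*} [TopologicalSpace Y] [NormalSpace Y]
    [ParacompactSpace Y] {S : Y → Set ℝ≥0} (hS : ∀ y, IsUpperSet (S y))
    (hloc : ∀ y, ∃ c, ∀ᶠ z in 𝓝 y, c ∈ S z) : ∃ f : C(Y, ℝ≥0), ∀ y, f y ∈ S y := by
  have hupper (y : Y) : IsUpperSet {r : ℝ | r.toNNReal ∈ S y} := fun _ _ hr =>
    hS y (Real.toNNReal_le_toNNReal hr)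
  obtain ⟨g, hg⟩ := exists_continuous_forall_mem_convex_of_local_const
    (fun y => (hupper y).ordConnected.convex) fun y =>
      let ⟨c, hc⟩ := hloc y
      ⟨c, by simpa only [Set.mem_ofPred_eq, Real.toNNReal_coe] using hc⟩
  exact ⟨⟨fun y => (g y).toNNReal, by fun_prop⟩, hg⟩

theorem exists_continuous_monotone_ge {α : Type*} [ConditionallyCompleteLinearOrder α]
    [TopologicalSpace α] [OrderTopology α] (f : C(ℝ≥0, α)) :
    ∃ ψ : C(ℝ≥0, α), Monotone ψ ∧ ∀ t, f t ≤ ψ t := by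
  let I : Set ℝ≥0 := Set.Icc 0 1
  have hbdd (t : ℝ≥0) : BddAbove ((fun u => f (u * t)) '' I) :=
    isCompact_Icc.bddAbove_image (by fun_prop)
  -- Running supremum over `[0, t]`, rescaled to a fixed compact set to get continuity in `t`.
  refine ⟨⟨fun t => sSup ((fun u => f (u * t)) '' I),
    isCompact_Icc.continuous_sSup (by fun_prop)⟩, fun t t' htt' => ?_, fun t => ?_⟩
  · refine csSup_le ((Set.nonempty_Icc.2 zero_le_one).image _) ?_
    rintro _ ⟨u, hu, rfl⟩
    have hscale : u * (t / t') * t' = u * t := by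
      rw [mul_assoc, div_mul_cancel_of_imp fun ht' => nonpos_iff_eq_zero.1 (ht' ▸ htt')]
    have hmem : u * (t / t') ∈ I := ⟨zero_le, mul_le_one' hu.2 (div_le_one_of_le₀ htt' zero_le)⟩
    exact le_csSup (hbdd t') ⟨u * (t / t'), hmem, congrArg f hscale⟩
  · exact le_csSup (hbdd t) ⟨1, ⟨zero_le_one, le_rfl⟩, by simp only [one_mul]⟩

theorem exists_continuous_monotone_eventually_forall_ge {ι : Type*} [Countable ι]
    {P : ι → ℝ≥0 → ℝ≥0 → Prop} {a : ι → ℝ≥0}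
    (hP : ∀ i q, a i ≤ q → ∀ᶠ p in atTop ×ˢ 𝓝[Set.Ici (a i)] q, P i p.1 p.2) :
    ∃ ψ : C(ℝ≥0, ℝ≥0), Monotone ψ ∧ ∀ i, ∀ᶠ t in atTop, ∀ s, ψ t ≤ s → P i s t := by
  have hIcc (i : ι) (b : ℝ≥0) : ∀ᶠ s in atTop, ∀ t ∈ Set.Icc (a i) b, P i s t :=
    eventually_forall_mem_of_isCompact isCompact_Icc fun q hq =>
      (hP i q hq.1).filter_mono (prod_mono_right _ (nhdsWithin_mono q Set.Icc_subset_Ici_self))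
  obtain ⟨e, he⟩ := exists_injective_nat ι
  let S (t : ℝ≥0) : Set ℝ≥0 := {c | ∀ s, c ≤ s → ∀ i, (e i : ℝ≥0) ≤ t → a i ≤ t → P i s t}
  have hS (t : ℝ≥0) : IsUpperSet (S t) := fun _ _ hcc' hc s hs => hc s (hcc'.trans hs)
  have hloc (t : ℝ≥0) : ∃ c, ∀ᶠ u in 𝓝 t, c ∈ S u := by
    obtain ⟨k, hk⟩ := exists_nat_gt t
    have hfin : {i | e i < k}.Finite := (Set.finite_lt_nat k).preimage he.injOn
    obtain ⟨c, hc⟩ := eventually_atTop.1 (hfin.eventually_all.2 fun i _ => hIcc i k)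
    refine ⟨c, (eventually_lt_nhds hk).mono fun u huk s hs i hiu hau => ?_⟩
    exact hc s hs i (by exact_mod_cast hiu.trans_lt huk) u ⟨hau, huk.le⟩
  obtain ⟨f, hf⟩ := exists_continuous_forall_mem_of_isUpperSet hS hloc
  obtain ⟨ψ, hψ, hfψ⟩ := exists_continuous_monotone_ge f
  refine ⟨ψ, hψ, fun i => ?_⟩
  filter_upwards [eventually_ge_atTop (e i : ℝ≥0), eventually_ge_atTop (a i)] with t het hat s hs
  exact hf t s ((hfψ t).trans hs) i het hat

theorem lemma_YY_general {ι : Type*} [Countable ι] {X : ι → Type*} [∀ n, TopologicalSpace (X n)]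
    [∀ n, NormalSpace (X n)] [∀ n, ParacompactSpace (X n)] [∀ n, LindelofSpace (X n)]
    (Ψ : ∀ n, X n → X n → ℝ≥0 → ℝ≥0 → Prop)
    (U : ∀ n, X n → Set (X n)) (hU : ∀ n x, U n x ∈ 𝓝 x)
    (Q : ∀ n, X n → ℝ≥0)
    (H : ∀ n x q, Q n x ≤ q →
      ∀ᶠ p in atTop ×ˢ 𝓝[Set.Ici (Q n x)] q, ∀ y ∈ U n x, Ψ n x y p.1 p.2) :
    ∃ ψ : ℝ≥0 → ℝ≥0, ∃ β : ∀ n, X n → ℝ≥0,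
      Continuous ψ ∧ Monotone ψ ∧ (∀ n, Continuous (β n)) ∧
      ∀ n y, ∃ x, ∀ t, β n y ≤ t → ∀ s, ψ t ≤ s → y ∈ U n x ∧ Ψ n x y s t := by
  choose C hC hcover using fun n => countable_cover_nhds_interior (hU n)
  have (n : ι) : Countable (C n) := (hC n).to_subtype
  obtain ⟨ψ, hψ, hψΨ⟩ := exists_continuous_monotone_eventually_forall_ge
    (P := fun (i : Σ n, C n) s t => ∀ y ∈ U i.1 i.2, Ψ i.1 i.2 y s t)
    fun i q hq => H i.1 i.2 q hq
  let S (n : ι) (y : X n) : Set ℝ≥0 :=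
    {b | ∃ x, ∀ t, b ≤ t → ∀ s, ψ t ≤ s → y ∈ U n x ∧ Ψ n x y s t}
  have hS (n : ι) (y : X n) : IsUpperSet (S n y) := fun _ _ hbb' ⟨x, hx⟩ =>
    ⟨x, fun t ht => hx t (hbb'.trans ht)⟩
  have hloc (n : ι) (y : X n) : ∃ b, ∀ᶠ z in 𝓝 y, b ∈ S n z := by
    obtain ⟨x, hxC, hyx⟩ := Set.mem_iUnion₂.1 ((hcover n).symm ▸ Set.mem_univ y)
    obtain ⟨b, hb⟩ := eventually_atTop.1 (hψΨ ⟨n, x, hxC⟩)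
    exact ⟨b, mem_of_superset (mem_interior_iff_mem_nhds.1 hyx) fun z hz =>
      ⟨x, fun t ht s hs => ⟨hz, hb t ht s hs z hz⟩⟩⟩
  choose β hβ using fun n => exists_continuous_forall_mem_of_isUpperSet (hS n) (hloc n)
  exact ⟨ψ, fun n => β n, ψ.continuous, hψ, fun n => (β n).continuous, hβ⟩

/-- **Lemma 2.2 (Lemma YY).** For each `n ∈ ℕ` let `X n` be a separable metric space, and
suppose the predicates `Ψ n` satisfy (uniformly in the given data `δ n`, `Q n`, `R n`, `ε n`)
the hypothesis of Lemma Y.  Then there are a single continuous increasing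
`ψ : [0,∞) → [0,∞)` and continuous functions `β n : X n → [0,∞)` such that for every `n`
and every `y : X n` there is `x : X n` with `d(x,y) < δ n x` and `Ψ n x y s t` for all
`t ≥ β n y` and `s ≥ ψ t`.  Here `[0,∞)` is modelled by `ℝ≥0`, and `t ∈ (q - ε, q + ε)` is
expressed as `dist t q < ε`. -/
theorem lemma_YY {X : ℕ → Type*} [∀ n, MetricSpace (X n)] [∀ n, SeparableSpace (X n)]
    (Ψ : ∀ n, X n → X n → NNReal → NNReal → Prop)
    (δ : ∀ n, X n → ℝ) (hδ : ∀ n x, 0 < δ n x)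
    (Q : ∀ n, X n → NNReal)
    (R : ∀ n, X n → NNReal → NNReal)
    (ε : ∀ n, X n → NNReal → ℝ) (hε : ∀ n x q, Q n x ≤ q → 0 < ε n x q)
    (H : ∀ (n : ℕ) (x : X n) (q : NNReal), Q n x ≤ q →
      ∀ (y : X n) (t : NNReal), Q n x ≤ t → ∀ s : NNReal, R n x q ≤ s →
        dist t q < ε n x q → dist x y < δ n x → Ψ n x y s t) :
    ∃ ψ : NNReal → NNReal, ∃ β : ∀ n, X n → NNReal,
      Continuous ψ ∧ Monotone ψ ∧ (∀ n, Continuous (β n)) ∧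
      ∀ (n : ℕ) (y : X n), ∃ x : X n, ∀ t : NNReal, β n y ≤ t → ∀ s : NNReal, ψ t ≤ s →
        dist x y < δ n x ∧ Ψ n x y s t := by
  have (n : ℕ) : SecondCountableTopology (X n) := UniformSpace.secondCountable_of_separable (X n)
  have hball n x : {y | dist x y < δ n x} ∈ 𝓝 x :=
    mem_of_superset (Metric.ball_mem_nhds x (hδ n x)) fun _ => Metric.mem_ball'.1
  refine lemma_YY_general Ψ (fun n x => {y | dist x y < δ n x}) hball Q fun n x q hq => ?_
  filter_upwards [prod_mem_prod (Ici_mem_atTop (R n x q))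
    (inter_mem_nhdsWithin _ (Metric.ball_mem_nhds q (hε n x q hq)))] with p ⟨hs, ht, htq⟩ y hy
  exact H n x q hq y p.2 ht p.1 hs htq hy
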